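/- Let X be a locally compact Polish space with a complete compatible metric d, and let G be a group of homeomorphisms of X such that: (i) the family {φ : φ ∈ G} is equicontinuous on every compact subset of X; and (ii) whenever a sequence of composition operators C_{φₙ} with φₙ ∈ G converges in the strong operator topology to a surjective lattice isometry T of (C₀(X), ‖·‖_∞), then T = C_φ for some φ ∈ G. Let L be a locally compact Polish space with no isolated points. For φ ∈ G define ψ_φ : X × L → X × L by ψ_φ(k, ℓ) = (φ(k), ℓ). Then there exists a norm N on C₀(X × L) such that: N is a lattice norm; N is equivalent to the supremum norm; every composition operator C_{ψ_φ} with φ ∈ G satisfies N(C_{ψ_φ} x) = N(x) for all x ∈ C₀(X × L); and conversely every lattice isomorphism T of C₀(X × L) satisfying N(T x) = N(x) for all x equals C_{ψ_φ} for some φ ∈ G. -/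

import Mathlib

open ZeroAtInfty Filter Topology Metric

noncomputable section

/-- Pointwise supremum of two continuous functions vanishing at infinity. -/
def c0sup {X : Type*} [TopologicalSpace X] (f g : C₀(X, ℝ)) : C₀(X, ℝ) where
  toFun := fun t => max (f t) (g t)
  continuous_toFun := (map_continuous f).max (map_continuous g)
  zero_at_infty' := by simpa using (zero_at_infty f).max (zero_at_infty g)

/-- Composition operator `f ↦ f ∘ φ` on `C₀(X)` induced by a homeomorphism `φ`. -/
def compOp {X : Type*} [TopologicalSpace X] (φ : X ≃ₜ X) (f : C₀(X, ℝ)) : C₀(X, ℝ) where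
  toFun := fun t => f (φ t)
  continuous_toFun := (map_continuous f).comp φ.continuous
  zero_at_infty' := (zero_at_infty f).comp φ.map_cocompact.le

section Basics

variable {Y : Type*} [TopologicalSpace Y]

lemma c0_abs_le_norm (f : C₀(Y, ℝ)) (t : Y) : |f t| ≤ ‖f‖ := by
  have := f.toBCF.norm_coe_le_norm t
  rwa [ZeroAtInftyContinuousMap.norm_toBCF_eq_norm] at this

lemma c0_norm_le {f : C₀(Y, ℝ)} {C : ℝ} (hC : 0 ≤ C) (h : ∀ t, |f t| ≤ C) : ‖f‖ ≤ C := by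
  rw [← ZeroAtInftyContinuousMap.norm_toBCF_eq_norm]
  exact (BoundedContinuousFunction.norm_le hC).2 h

@[simp] lemma c0sup_apply (f g : C₀(Y, ℝ)) (t : Y) : c0sup f g t = max (f t) (g t) := rfl

@[simp] lemma compOp_apply (φ : Y ≃ₜ Y) (f : C₀(Y, ℝ)) (t : Y) : compOp φ f t = f (φ t) := rfl

lemma c0_bump [T2Space Y] [LocallyCompactSpace Y] {A F : Set Y} (hA : IsCompact A)
    (hF : IsClosed F) (hd : Disjoint A F) :
    ∃ f : C₀(Y, ℝ), (∀ t ∈ A, f t = 1) ∧ (∀ t ∈ F, f t = 0) ∧ (∀ t, 0 ≤ f t) ∧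
      ∀ t, f t ≤ 1 := by
  obtain ⟨f, h1, h0, hc, hI⟩ := exists_continuous_one_zero_of_isCompact hA hF hd
  exact ⟨⟨f, hc.is_zero_at_infty⟩, fun t ht => h1 ht, fun t ht => h0 ht,
    fun t => (hI t).1, fun t => (hI t).2⟩

lemma c0_bump_pt [T2Space Y] [LocallyCompactSpace Y] (s : Y) {U : Set Y} (hU : U ∈ 𝓝 s) :
    ∃ f : C₀(Y, ℝ), f s = 1 ∧ (∀ t, t ∉ U → f t = 0) ∧ (∀ t, 0 ≤ f t) ∧ ∀ t, f t ≤ 1 := by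
  obtain ⟨f, h1, h0, hp, hl⟩ := c0_bump (A := {s}) (F := (interior U)ᶜ) isCompact_singleton
    isOpen_interior.isClosed_compl
    (Set.disjoint_singleton_left.2 fun h => h (mem_interior_iff_mem_nhds.2 hU))
  exact ⟨f, h1 s rfl, fun t ht => h0 t fun h => ht (interior_subset h), hp, hl⟩

lemma c0_lattice_functional [T2Space Y] [LocallyCompactSpace Y] (Λ : C₀(Y, ℝ) →L[ℝ] ℝ)
    (hΛ : ∀ f g, Λ (c0sup f g) = max (Λ f) (Λ g)) (hne : ∃ f, Λ f ≠ 0) :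
    ∃ s : Y, ∃ c : ℝ, 0 < c ∧ ∀ f, Λ f = c * f s := by
  have mono : ∀ f g : C₀(Y, ℝ), (∀ t, f t ≤ g t) → Λ f ≤ Λ g := by
    intro f g h
    have : c0sup f g = g := by ext t; simp [h t]
    have h2 := hΛ f g
    rw [this] at h2
    rw [h2]; exact le_max_left _ _
  have habs : ∀ f : C₀(Y, ℝ), Λ (c0sup f (-f)) = |Λ f| := by
    intro f; rw [hΛ, map_neg]; rfl
  have key : ∃ s : Y, ∀ f : C₀(Y, ℝ), f s = 0 → Λ f = 0 := by
    by_contra hcon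
    push Not at hcon
    have hg : ∀ s : Y, ∃ g : C₀(Y, ℝ), (∀ t, 0 ≤ g t) ∧ g s = 1 ∧ Λ g = 0 := by
      intro s
      obtain ⟨f, hf0, hf⟩ := hcon s
      obtain ⟨b, hb1, -, hb0, -⟩ := c0_bump_pt s (Filter.univ_mem)
      have hk : 0 < Λ (c0sup f (-f)) := by rw [habs]; exact abs_pos.2 hf
      set k := c0sup f (-f) with hkdef
      have hks : k s = 0 := by simp [hkdef, hf0]
      refine ⟨c0sup (b - (Λ b / Λ k) • k) 0, fun t => by simp, by simp [hks, hb1], ?_⟩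
      rw [hΛ, map_sub, map_smul, smul_eq_mul, div_mul_cancel₀ _ hk.ne']
      simp
    obtain ⟨h0, hh0⟩ := hne
    have hpos : 0 < Λ (c0sup h0 (-h0)) := by rw [habs]; exact abs_pos.2 hh0
    set h := c0sup h0 (-h0) with hdef
    have hnn : ∀ t, 0 ≤ h t := fun t => by
      simp only [hdef, c0sup_apply, ZeroAtInftyContinuousMap.neg_apply]
      exact abs_nonneg (h0 t)
    have hε : ∀ ε > 0, Λ h ≤ ‖Λ‖ * ε := by
      intro ε hε
      have hev : ∀ᶠ t in cocompact Y, h t < ε := (zero_at_infty h).eventually_lt_const hε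
      obtain ⟨K, hK, hKs⟩ := Filter.mem_cocompact.1 hev
      obtain ⟨g, hg0, hgΛ, hgh⟩ : ∃ g : C₀(Y, ℝ), (∀ t, 0 ≤ g t) ∧ Λ g = 0 ∧
          ∀ t ∈ K, h t ≤ g t := by
        refine hK.induction_on (p := fun S => ∃ g : C₀(Y, ℝ), (∀ t, 0 ≤ g t) ∧ Λ g = 0 ∧
          ∀ t ∈ S, h t ≤ g t) ⟨0, by simp, by simp, by simp⟩ ?_ ?_ ?_
        · rintro S S' hSS ⟨g, h1, h2, h3⟩
          exact ⟨g, h1, h2, fun t ht => h3 t (hSS ht)⟩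
        · rintro S S' ⟨g, h1, h2, h3⟩ ⟨g', h1', h2', h3'⟩
          refine ⟨c0sup g g', fun t => le_max_of_le_left (h1 t), by rw [hΛ, h2, h2', max_self],
            ?_⟩
          rintro t (ht | ht)
          · exact le_max_of_le_left (h3 t ht)
          · exact le_max_of_le_right (h3' t ht)
        · intro s _
          obtain ⟨g, h1, h2, h3⟩ := hg s
          have hc : 0 ≤ h s + 1 := by linarith [hnn s]
          refine ⟨{t | h t ≤ ((h s + 1) • g) t}, mem_nhdsWithin_of_mem_nhds ?_, (h s + 1) • g,
            fun t => ?_, by simp [h3], fun t ht => ht⟩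
          · have : ∀ᶠ t in 𝓝 s, h t < ((h s + 1) • g) t :=
              (map_continuous h).continuousAt.eventually_lt
                (map_continuous ((h s + 1) • g)).continuousAt (by simp [h2])
            exact this.mono fun t ht => le_of_lt ht
          · simpa using mul_nonneg hc (h1 t)
      have hn : ‖c0sup (h - g) 0‖ ≤ ε := by
        refine c0_norm_le hε.le fun t => ?_
        rw [c0sup_apply]
        simp only [ZeroAtInftyContinuousMap.sub_apply, ZeroAtInftyContinuousMap.zero_apply]
        rw [abs_of_nonneg (le_max_right _ _)]
        refine max_le ?_ hε.le
        by_cases ht : t ∈ K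
        · linarith [hgh t ht]
        · have : h t < ε := hKs ht
          linarith [hg0 t]
      calc Λ h ≤ Λ (c0sup (h - g) 0) := by
            rw [hΛ (h - g) 0, map_sub, hgΛ, sub_zero]; exact le_max_left _ _
        _ ≤ ‖Λ (c0sup (h - g) 0)‖ := le_abs_self _
        _ ≤ ‖Λ‖ * ‖c0sup (h - g) 0‖ := Λ.le_opNorm _
        _ ≤ ‖Λ‖ * ε := by gcongr
    have := hε (Λ h / (2 * (‖Λ‖ + 1))) (by positivity)
    have h3 : ‖Λ‖ * (Λ h / (2 * (‖Λ‖ + 1))) ≤ Λ h / 2 := by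
      have h4 : ‖Λ‖ * (Λ h / (2 * (‖Λ‖ + 1))) = (Λ h / 2) * (‖Λ‖ / (‖Λ‖ + 1)) := by
        field_simp
      rw [h4]
      apply mul_le_of_le_one_right (by positivity)
      rw [div_le_one (by positivity)]; linarith
    linarith
  obtain ⟨s, hs⟩ := key
  obtain ⟨b, hb1, -, hb0, -⟩ := c0_bump_pt s (Filter.univ_mem)
  have hrep : ∀ f, Λ f = Λ b * f s := by
    intro f
    have := hs (f - f s • b) (by simp [hb1])
    rw [map_sub, map_smul, smul_eq_mul] at this
    linarith
  refine ⟨s, Λ b, ?_, hrep⟩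
  have h0 : 0 ≤ Λ b := by simpa using mono 0 b (by simpa using hb0)
  refine lt_of_le_of_ne h0 fun h => ?_
  obtain ⟨f, hf⟩ := hne
  exact hf (by rw [hrep, ← h, zero_mul])

lemma c0_lattice_iso_aux [T2Space Y] [LocallyCompactSpace Y] (T : C₀(Y, ℝ) ≃L[ℝ] C₀(Y, ℝ))
    (hT : ∀ f g, T (c0sup f g) = c0sup (T f) (T g)) :
    ∃ σ : Y → Y, ∃ w : Y → ℝ, Continuous σ ∧ Continuous w ∧ (∀ t, 0 < w t) ∧
      ∀ f t, T f t = w t * f (σ t) := by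
  have h : ∀ t : Y, ∃ s : Y, ∃ c : ℝ, 0 < c ∧ ∀ f, T f t = c * f s := by
    intro t
    let ev : C₀(Y, ℝ) →ₗ[ℝ] ℝ :=
      { toFun := fun f => f t, map_add' := fun _ _ => rfl, map_smul' := fun _ _ => rfl }
    let Λ : C₀(Y, ℝ) →L[ℝ] ℝ :=
      (ev.mkContinuous 1 fun f => by rw [one_mul]; exact c0_abs_le_norm f t).comp
        (T : C₀(Y, ℝ) →L[ℝ] C₀(Y, ℝ))
    have hΛ : ∀ f, Λ f = T f t := fun f => rfl
    obtain ⟨b, hb1, -⟩ := c0_bump_pt t (Filter.univ_mem)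
    exact c0_lattice_functional Λ (fun f g => by simp [hΛ, hT])
      ⟨T.symm b, by simp [hΛ, hb1]⟩
  choose σ w hw hσ using h
  have hσc : Continuous σ := by
    rw [continuous_iff_continuousAt]
    intro t U hU
    obtain ⟨f, h1, h0, -⟩ := c0_bump_pt (σ t) hU
    have : ∀ᶠ t' in 𝓝 t, 0 < T f t' :=
      (map_continuous (T f)).continuousAt.eventually_const_lt
        (by rw [hσ t f, h1, mul_one]; exact hw t)
    refine Filter.mem_map.2 (this.mono fun t' ht' => ?_)
    by_contra hn
    rw [hσ, h0 _ hn, mul_zero] at ht'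
    exact lt_irrefl _ ht'
  refine ⟨σ, w, hσc, ?_, hw, fun f t => hσ t f⟩
  rw [continuous_iff_continuousAt]
  intro t
  obtain ⟨f, h1, -⟩ := c0_bump_pt (σ t) (Filter.univ_mem)
  have hfc : Continuous fun t' => f (σ t') := (map_continuous f).comp hσc
  have hev : ∀ᶠ t' in 𝓝 t, f (σ t') ≠ 0 :=
    hfc.continuousAt.eventually_ne (by rw [h1]; exact one_ne_zero)
  have : ContinuousAt (fun t' => T f t' / f (σ t')) t :=
    (map_continuous (T f)).continuousAt.div hfc.continuousAt (by rw [h1]; exact one_ne_zero)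
  refine this.congr (hev.mono fun t' ht' => ?_)
  simp only
  rw [hσ, mul_div_cancel_right₀ _ ht']

lemma c0_ext_pt [T2Space Y] [LocallyCompactSpace Y] {s t : Y} {c : ℝ}
    (h : ∀ f : C₀(Y, ℝ), c * f s = f t) : s = t ∧ c = 1 := by
  have hst : s = t := by
    by_contra hne
    obtain ⟨f, h1, h0, -⟩ := c0_bump_pt t (U := {s}ᶜ) (isOpen_compl_singleton.mem_nhds
      (by simpa using fun h => hne h.symm))
    have := h f
    rw [h1, h0 s (by simp)] at this
    simp at this
  subst hst
  obtain ⟨f, h1, -⟩ := c0_bump_pt s Filter.univ_mem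
  have := h f
  rw [h1] at this
  exact ⟨rfl, by simpa using this⟩

lemma c0_lattice_iso [T2Space Y] [LocallyCompactSpace Y] (T : C₀(Y, ℝ) ≃L[ℝ] C₀(Y, ℝ))
    (hT : ∀ f g, T (c0sup f g) = c0sup (T f) (T g)) :
    ∃ σ : Y ≃ₜ Y, ∃ w v : Y → ℝ, Continuous w ∧ Continuous v ∧ (∀ t, 0 < w t) ∧ (∀ t, 0 < v t) ∧
      (∀ f t, T f t = w t * f (σ t)) ∧ (∀ f t, T.symm f t = v t * f (σ.symm t)) ∧
      ∀ t, w t * v (σ t) = 1 := by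
  obtain ⟨σ, w, hσ, hw, hw0, h⟩ := c0_lattice_iso_aux T hT
  obtain ⟨τ, v, hτ, hv, hv0, h'⟩ := c0_lattice_iso_aux T.symm (fun f g => by
    apply T.injective; rw [hT]; simp)
  have e1 : ∀ t, τ (σ t) = t ∧ w t * v (σ t) = 1 := fun t => c0_ext_pt fun f => by
    rw [mul_assoc, ← h', ← h]; simp
  have e2 : ∀ t, σ (τ t) = t ∧ v t * w (τ t) = 1 := fun t => c0_ext_pt fun f => by
    rw [mul_assoc, ← h, ← h']; simp
  exact ⟨⟨⟨σ, τ, fun t => (e1 t).1, fun t => (e2 t).1⟩, hσ, hτ⟩, w, v, hw, hv, hw0, hv0, h, h',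
    fun t => (e1 t).2⟩

end Basics

section Sums

lemma aw_summable : Summable fun n : ℕ => (1 / 3 : ℝ) ^ n :=
  summable_geometric_of_lt_one (by norm_num) (by norm_num)

lemma aw_tsum : ∑' n : ℕ, (1 / 3 : ℝ) ^ n = 3 / 2 := by
  rw [tsum_geometric_of_lt_one (by norm_num) (by norm_num)]; norm_num

lemma aw_summable_mul {c : ℕ → ℝ} {C : ℝ} (h0 : ∀ n, 0 ≤ c n) (hC : ∀ n, c n ≤ C) :
    Summable fun n : ℕ => (1 / 3 : ℝ) ^ n * c n :=
  Summable.of_nonneg_of_le (fun n => mul_nonneg (by positivity) (h0 n))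
    (fun n => mul_le_mul_of_nonneg_left (hC n) (by positivity)) (aw_summable.mul_right C)

lemma aw_tsum_le {c : ℕ → ℝ} {C : ℝ} (h0 : ∀ n, 0 ≤ c n) (hC : ∀ n, c n ≤ C) :
    ∑' n : ℕ, (1 / 3 : ℝ) ^ n * c n ≤ 3 / 2 * C := by
  rw [← aw_tsum, ← tsum_mul_right]
  exact (aw_summable_mul h0 hC).tsum_le_tsum
    (fun n => mul_le_mul_of_nonneg_left (hC n) (by positivity)) (aw_summable.mul_right C)

lemma aw_tsum_split {c : ℕ → ℝ} (h0 : ∀ n, 0 ≤ c n) (hC : ∀ n, c n ≤ 1) (M : ℕ) :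
    ∑' n : ℕ, (1 / 3 : ℝ) ^ n * c n ≤
      ∑ n ∈ Finset.range M, (1 / 3 : ℝ) ^ n * c n + (1 / 3) ^ M * (3 / 2) := by
  rw [← (aw_summable_mul h0 hC).sum_add_tsum_nat_add M]
  gcongr
  have := aw_tsum_le (c := fun n => c (n + M)) (fun n => h0 _) (fun n => hC _)
  calc ∑' n : ℕ, (1 / 3 : ℝ) ^ (n + M) * c (n + M)
      = (1 / 3) ^ M * ∑' n : ℕ, (1 / 3 : ℝ) ^ n * c (n + M) := by
        rw [← tsum_mul_left]; congr 1; ext n; rw [pow_add]; ring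
    _ ≤ (1 / 3) ^ M * (3 / 2) := by
        apply mul_le_mul_of_nonneg_left _ (by positivity); linarith

lemma aw_tsum_tail {c : ℕ → ℝ} (h0 : ∀ n, 0 ≤ c n) (hC : ∀ n, c n ≤ 1) (M : ℕ)
    (hM : ∀ n < M, c n = 0) : ∑' n : ℕ, (1 / 3 : ℝ) ^ n * c n ≤ (1 / 3) ^ M * (3 / 2) := by
  refine (aw_tsum_split h0 hC M).trans ?_
  rw [Finset.sum_eq_zero (fun n hn => by rw [hM n (Finset.mem_range.1 hn), mul_zero]), zero_add]

lemma aw_tsum_gap {c : ℕ → ℝ} (h0 : ∀ n, 0 ≤ c n) (hC : ∀ n, c n ≤ 1) (m i : ℕ)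
    (him : i ≤ m) (hi : c i = 0) : ∑' n : ℕ, (1 / 3 : ℝ) ^ n * c n ≤
      ∑ n ∈ Finset.range (m + 1), (1 / 3 : ℝ) ^ n - (1 / 3) ^ m * (1 / 2) := by
  refine (aw_tsum_split h0 hC (m + 1)).trans ?_
  have hmem : i ∈ Finset.range (m + 1) := Finset.mem_range.2 (by omega)
  have h1 : ∑ n ∈ Finset.range (m + 1), (1 / 3 : ℝ) ^ n * c n ≤
      ∑ n ∈ Finset.range (m + 1), (1 / 3 : ℝ) ^ n - (1 / 3) ^ i := by
    rw [← Finset.add_sum_erase _ _ hmem, ← Finset.add_sum_erase (Finset.range (m + 1))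
      (fun n => (1 / 3 : ℝ) ^ n) hmem, hi, mul_zero, zero_add, add_sub_cancel_left]
    exact Finset.sum_le_sum fun n _ => mul_le_of_le_one_right (by positivity) (hC n)
  have h2 : (1 / 3 : ℝ) ^ m ≤ (1 / 3) ^ i :=
    pow_le_pow_of_le_one (by norm_num) (by norm_num) him
  have h3 : (1 / 3 : ℝ) ^ (m + 1) * (3 / 2) = (1 / 3) ^ m * (1 / 2) := by rw [pow_succ]; ring
  rw [h3]
  linarith

lemma aw_tsum_ge {c : ℕ → ℝ} {C : ℝ} (h0 : ∀ n, 0 ≤ c n) (hC : ∀ n, c n ≤ C) (m : ℕ)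
    (hm : ∀ n ≤ m, c n = 1) : ∑ n ∈ Finset.range (m + 1), (1 / 3 : ℝ) ^ n ≤
      ∑' n : ℕ, (1 / 3 : ℝ) ^ n * c n := by
  refine le_trans (le_of_eq ?_) ((aw_summable_mul h0 hC).sum_le_tsum (Finset.range (m + 1))
    fun n _ => mul_nonneg (by positivity) (h0 n))
  refine Finset.sum_congr rfl fun n hn => ?_
  rw [hm n (by have := Finset.mem_range.1 hn; omega), mul_one]

end Sums

section TheNorm

variable {X L : Type*} [TopologicalSpace X] [TopologicalSpace L]

/-- The weighted sum of a function along a sequence moved by `φ`. -/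
def pSum (z : ℕ → X × L) (φ : X ≃ₜ X) (f : C₀(X × L, ℝ)) : ℝ :=
  ∑' n : ℕ, (1 / 3 : ℝ) ^ n * |f (φ (z n).1, (z n).2)|

/-- The supremum of the weighted sums over the group. -/
def pSup (G : Set (X ≃ₜ X)) (z : ℕ → X × L) (f : C₀(X × L, ℝ)) : ℝ :=
  ⨆ φ : G, pSum z φ f

lemma pSum_le (z : ℕ → X × L) (φ : X ≃ₜ X) (f : C₀(X × L, ℝ)) : pSum z φ f ≤ 3 / 2 * ‖f‖ :=
  aw_tsum_le (fun _ => abs_nonneg _) (fun _ => c0_abs_le_norm f _)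

lemma pSum_nonneg (z : ℕ → X × L) (φ : X ≃ₜ X) (f : C₀(X × L, ℝ)) : 0 ≤ pSum z φ f :=
  tsum_nonneg fun _ => mul_nonneg (by positivity) (abs_nonneg _)

lemma pSum_summable (z : ℕ → X × L) (φ : X ≃ₜ X) (f : C₀(X × L, ℝ)) :
    Summable fun n : ℕ => (1 / 3 : ℝ) ^ n * |f (φ (z n).1, (z n).2)| :=
  aw_summable_mul (fun _ => abs_nonneg _) (fun _ => c0_abs_le_norm f _)

lemma pSum_le_pSup {G : Set (X ≃ₜ X)} (z : ℕ → X × L) {φ : X ≃ₜ X} (hφ : φ ∈ G)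
    (f : C₀(X × L, ℝ)) : pSum z φ f ≤ pSup G z f :=
  le_ciSup (f := fun φ : G => pSum z φ f)
    ⟨3 / 2 * ‖f‖, by rintro _ ⟨φ, rfl⟩; exact pSum_le z φ f⟩ ⟨φ, hφ⟩

lemma pSup_le {G : Set (X ≃ₜ X)} (hG : G.Nonempty) (z : ℕ → X × L)
    {f : C₀(X × L, ℝ)} {C : ℝ} (h : ∀ φ ∈ G, pSum z φ f ≤ C) : pSup G z f ≤ C :=
  haveI : Nonempty G := hG.to_subtype
  ciSup_le fun φ => h φ φ.2

lemma pSup_add {G : Set (X ≃ₜ X)} (hG : G.Nonempty) (z : ℕ → X × L) (f g : C₀(X × L, ℝ)) :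
    pSup G z (f + g) ≤ pSup G z f + pSup G z g := by
  refine pSup_le hG z fun φ hφ => ?_
  refine le_trans ?_ (add_le_add (pSum_le_pSup z hφ f) (pSum_le_pSup z hφ g))
  unfold pSum
  rw [← (pSum_summable z φ f).tsum_add (pSum_summable z φ g)]
  refine (pSum_summable z φ (f + g)).tsum_le_tsum (fun n => ?_)
    ((pSum_summable z φ f).add (pSum_summable z φ g))
  rw [← mul_add]
  exact mul_le_mul_of_nonneg_left (abs_add_le _ _) (by positivity)

lemma pSup_smul {G : Set (X ≃ₜ X)} (z : ℕ → X × L) (c : ℝ)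
    (f : C₀(X × L, ℝ)) : pSup G z (c • f) = |c| * pSup G z f := by
  unfold pSup
  rw [Real.mul_iSup_of_nonneg (abs_nonneg c)]
  congr 1; ext φ
  unfold pSum
  rw [← tsum_mul_left]
  congr 1; ext n
  rw [ZeroAtInftyContinuousMap.smul_apply, smul_eq_mul, abs_mul]; ring

lemma pSup_mono {G : Set (X ≃ₜ X)} (hG : G.Nonempty) (z : ℕ → X × L) (f g : C₀(X × L, ℝ))
    (h : ∀ t, |f t| ≤ |g t|) : pSup G z f ≤ pSup G z g := by
  refine pSup_le hG z fun φ hφ => le_trans ?_ (pSum_le_pSup z hφ g)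
  exact (pSum_summable z φ f).tsum_le_tsum
    (fun n => mul_le_mul_of_nonneg_left (h _) (by positivity)) (pSum_summable z φ g)

lemma pSup_nonneg {G : Set (X ≃ₜ X)} (z : ℕ → X × L) (f : C₀(X × L, ℝ)) : 0 ≤ pSup G z f :=
  Real.iSup_nonneg fun φ => pSum_nonneg z φ f

lemma pSup_comp_le {G : Set (X ≃ₜ X)} (hG : G.Nonempty)
    (h_comp : ∀ φ ∈ G, ∀ ψ ∈ G, φ.trans ψ ∈ G) (z : ℕ → X × L) {φ : X ≃ₜ X} (hφ : φ ∈ G)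
    (f : C₀(X × L, ℝ)) :
    pSup G z (compOp (φ.prodCongr (Homeomorph.refl L)) f) ≤ pSup G z f :=
  pSup_le hG z fun θ hθ => pSum_le_pSup z (h_comp θ hθ φ hφ) f

lemma pSup_comp {G : Set (X ≃ₜ X)} (hG : G.Nonempty)
    (h_comp : ∀ φ ∈ G, ∀ ψ ∈ G, φ.trans ψ ∈ G) (h_inv : ∀ φ ∈ G, φ.symm ∈ G)
    (z : ℕ → X × L) {φ : X ≃ₜ X} (hφ : φ ∈ G) (f : C₀(X × L, ℝ)) :
    pSup G z (compOp (φ.prodCongr (Homeomorph.refl L)) f) = pSup G z f := by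
  refine le_antisymm (pSup_comp_le hG h_comp z hφ f) ?_
  have := pSup_comp_le hG h_comp z (h_inv φ hφ) (compOp (φ.prodCongr (Homeomorph.refl L)) f)
  have e : compOp (φ.symm.prodCongr (Homeomorph.refl L))
      (compOp (φ.prodCongr (Homeomorph.refl L)) f) = f := by
    refine ZeroAtInftyContinuousMap.ext fun t => ?_
    obtain ⟨a, b⟩ := t
    simp [compOp_apply]
  rwa [e] at this

lemma c0_norm_comp {Y : Type*} [TopologicalSpace Y] (σ : Y ≃ₜ Y) (f : C₀(Y, ℝ)) :
    ‖compOp σ f‖ = ‖f‖ := by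
  refine le_antisymm (c0_norm_le (norm_nonneg _) fun t => c0_abs_le_norm f _)
    (c0_norm_le (norm_nonneg _) fun t => ?_)
  have := c0_abs_le_norm (compOp σ f) (σ.symm t)
  simpa using this

/-- If `T f = w · f ∘ σ` preserves the norm, then `w ≤ 1`. -/
lemma weight_le_one [T2Space X] [LocallyCompactSpace X] [T2Space L] [LocallyCompactSpace L]
    (hL : ∀ ℓ : L, ¬IsOpen ({ℓ} : Set L)) {G : Set (X ≃ₜ X)} (hG : G.Nonempty) (z : ℕ → X × L)
    (T : C₀(X × L, ℝ) → C₀(X × L, ℝ)) (σ : X × L ≃ₜ X × L) (w : X × L → ℝ) (hw : Continuous w)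
    (hT : ∀ f t, T f t = w t * f (σ t))
    (hN : ∀ f, ‖T f‖ + pSup G z (T f) = ‖f‖ + pSup G z f) (t : X × L) : w t ≤ 1 := by
  have hne : ∀ ℓ : L, (𝓝[≠] ℓ).NeBot := fun ℓ => by
    rw [neBot_iff, Ne, ← isOpen_singleton_iff_punctured_nhds]; exact hL ℓ
  classical
  have key : ∀ M : ℕ, w t ≤ 1 + (1 / 3) ^ M * (3 / 2) := by
    intro M
    set A : Set L := ↑((Finset.range M).image fun n => (z n).2) with hA
    have hAfin : A.Finite := Finset.finite_toSet _
    have hd : Dense Aᶜ := by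
      have := (dense_univ (X := L)).sdiff_finite hAfin
      rwa [← Set.compl_eq_univ_diff] at this
    have hd2 : Dense (σ ⁻¹' (Prod.snd ⁻¹' Aᶜ)) :=
      (hd.preimage isOpenMap_snd).preimage σ.isOpenMap
    have hcl : IsClosed {t | w t ≤ 1 + (1 / 3) ^ M * (3 / 2)} :=
      isClosed_le hw continuous_const
    refine hcl.closure_subset_iff.2 ?_ (hd2 t)
    intro s hs
    obtain ⟨f, h1, h0, hp, hl⟩ := c0_bump_pt (σ s) (U := Prod.snd ⁻¹' Aᶜ)
      ((hAfin.isClosed.isOpen_compl.preimage continuous_snd).mem_nhds hs)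
    have habs : ∀ u, |f u| ≤ 1 := fun u => by rw [abs_of_nonneg (hp u)]; exact hl u
    have e1 : ‖f‖ ≤ 1 := c0_norm_le zero_le_one habs
    have e2 : pSup G z f ≤ (1 / 3) ^ M * (3 / 2) := by
      refine pSup_le hG z fun φ _ => aw_tsum_tail (fun _ => abs_nonneg _) (fun _ => habs _) M ?_
      intro n hn
      rw [abs_eq_zero]
      apply h0
      simp only [Set.mem_preimage, Set.mem_compl_iff, not_not, hA]
      exact Finset.mem_coe.2 (Finset.mem_image_of_mem _ (Finset.mem_range.2 hn))
    have e3 : w s ≤ ‖T f‖ := by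
      have := c0_abs_le_norm (T f) s
      rw [hT, h1, mul_one] at this
      exact (le_abs_self _).trans this
    have e4 := hN f
    have e5 := pSup_nonneg (G := G) z (T f)
    show w s ≤ _
    linarith
  have hlim : Tendsto (fun M : ℕ => 1 + (1 / 3 : ℝ) ^ M * (3 / 2)) atTop (𝓝 (1 + 0 * (3 / 2))) :=
    ((tendsto_pow_atTop_nhds_zero_of_lt_one (by norm_num) (by norm_num)).mul_const _).const_add _
  have := ge_of_tendsto' hlim key
  simpa using this

/-- Key lemma: the group elements approximate a symmetry of the seminorm. -/
lemma approx_of_invariant [T2Space X] [LocallyCompactSpace X] [T2Space L] [LocallyCompactSpace L]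
    {G : Set (X ≃ₜ X)} (h_id : Homeomorph.refl X ∈ G) (z : ℕ → X × L)
    (σ : X × L ≃ₜ X × L) (hσ : ∀ f, pSup G z (compOp σ f) = pSup G z f) (m : ℕ)
    (F : Set (X × L)) (hF : IsClosed F) (hz : ∀ k ≤ m, σ (z k) ∉ F) :
    ∃ φ ∈ G, ∀ i ≤ m, (φ (z i).1, (z i).2) ∉ F := by
  by_contra hcon
  push Not at hcon
  set A : Set (X × L) := (fun k => σ (z k)) '' Set.Iic m with hA
  have hAc : IsCompact A := ((Set.finite_Iic m).image _).isCompact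
  obtain ⟨f, h1, h0, hp, hl⟩ := c0_bump hAc hF (by
    rw [Set.disjoint_left]
    rintro _ ⟨k, hk, rfl⟩
    exact hz k hk)
  have habs : ∀ u, |f u| ≤ 1 := fun u => by rw [abs_of_nonneg (hp u)]; exact hl u
  have e1 : pSup G z f ≤ ∑ n ∈ Finset.range (m + 1), (1 / 3 : ℝ) ^ n - (1 / 3) ^ m * (1 / 2) := by
    refine pSup_le ⟨_, h_id⟩ z fun φ hφ => ?_
    obtain ⟨i, him, hi⟩ := hcon φ hφ
    exact aw_tsum_gap (fun _ => abs_nonneg _) (fun _ => habs _) m i him (by rw [h0 _ hi, abs_zero])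
  have e2 : ∑ n ∈ Finset.range (m + 1), (1 / 3 : ℝ) ^ n ≤ pSum z (Homeomorph.refl X)
      (compOp σ f) := by
    refine aw_tsum_ge (fun _ => abs_nonneg _) (fun _ => c0_abs_le_norm _ _) m fun n hn => ?_
    have : f (σ (z n)) = 1 := h1 _ ⟨n, hn, rfl⟩
    simp [this]
  have e3 := pSum_le_pSup z h_id (compOp σ f)
  rw [hσ] at e3
  have : (0 : ℝ) < (1 / 3) ^ m * (1 / 2) := by positivity
  linarith

lemma exists_good_seq [SecondCountableTopology X] [SecondCountableTopology L] [T1Space L]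
    [Nonempty (X × L)] (hL : ∀ ℓ : L, ¬IsOpen ({ℓ} : Set L)) :
    ∃ z : ℕ → X × L, DenseRange z ∧ Function.Injective fun n => (z n).2 := by
  have hne : ∀ ℓ : L, (𝓝[≠] ℓ).NeBot := fun ℓ => by
    rw [neBot_iff, Ne, ← isOpen_singleton_iff_punctured_nhds]; exact hL ℓ
  have hB := TopologicalSpace.isBasis_countableBasis (X × L)
  have hBne : (TopologicalSpace.countableBasis (X × L)).Nonempty := by
    obtain ⟨a⟩ := ‹Nonempty (X × L)›
    obtain ⟨U, hU, -⟩ := hB.exists_subset_of_mem_open (Set.mem_univ a) isOpen_univ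
    exact ⟨U, hU⟩
  obtain ⟨U, hU⟩ := (TopologicalSpace.countable_countableBasis (X × L)).exists_eq_range hBne
  have hUm : ∀ n, U n ∈ TopologicalSpace.countableBasis (X × L) := fun n => by
    rw [hU]; exact ⟨n, rfl⟩
  have hg : ∀ n (s : Finset L), ∃ a ∈ U n, a.2 ∉ s := by
    intro n s
    have hd : Dense (Set.univ \ (s : Set L)) := dense_univ.sdiff_finite s.finite_toSet
    have ho : IsOpen (Prod.snd '' U n) := isOpenMap_snd _ (hB.isOpen (hUm n))
    obtain ⟨_, ⟨a, ha, rfl⟩, hs⟩ := hd.inter_open_nonempty _ ho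
      ((TopologicalSpace.nonempty_of_mem_countableBasis (hUm n)).image _)
    exact ⟨a, ha, fun h => hs.2 h⟩
  choose g hgU hgs using hg
  classical
  let acc : ℕ → Finset L := fun n => Nat.rec ∅ (fun k s => insert (g k s).2 s) n
  have hacc : ∀ n, acc (n + 1) = insert (g n (acc n)).2 (acc n) := fun n => rfl
  have hmono : Monotone acc := monotone_nat_of_le_succ fun n => by
    rw [hacc]; exact Finset.subset_insert _ _
  have hlt : ∀ k n, k < n → (g k (acc k)).2 ≠ (g n (acc n)).2 := by
    intro k n hkn h
    apply hgs n (acc n)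
    rw [← h]
    exact hmono (Nat.succ_le_of_lt hkn) (by rw [Nat.succ_eq_add_one, hacc]; simp)
  refine ⟨fun n => g n (acc n), ?_, ?_⟩
  · refine hB.dense_iff.2 fun o ho _ => ?_
    rw [hU] at ho
    obtain ⟨n, rfl⟩ := ho
    exact ⟨_, hgU n (acc n), ⟨n, rfl⟩⟩
  · intro k n h
    rcases lt_trichotomy k n with hkn | hkn | hkn
    · exact absurd h (hlt k n hkn)
    · exact hkn
    · exact absurd h.symm (hlt n k hkn)

end TheNorm

section Limits

variable {X : Type*} [MetricSpace X] [LocallyCompactSpace X]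

/-- Equicontinuity at a point. -/
lemma equi_at {G : Set (X ≃ₜ X)}
    (h_equi : ∀ K : Set X, IsCompact K → ∀ ε > 0, ∃ δ > 0,
      ∀ x ∈ K, ∀ y ∈ K, dist x y < δ → ∀ φ ∈ G, dist (φ x) (φ y) < ε)
    (x : X) {ε : ℝ} (hε : 0 < ε) :
    ∀ᶠ y in 𝓝 x, ∀ φ ∈ G, dist (φ x) (φ y) < ε := by
  obtain ⟨K, hK, hKx⟩ := exists_compact_mem_nhds x
  obtain ⟨δ, hδ, h⟩ := h_equi K hK ε hε
  filter_upwards [hKx, Metric.ball_mem_nhds x hδ] with y hy hyx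
  exact h x (mem_of_mem_nhds hKx) y hy (by rwa [dist_comm])

lemma equi_tendsto {G : Set (X ≃ₜ X)}
    (h_equi : ∀ K : Set X, IsCompact K → ∀ ε > 0, ∃ δ > 0,
      ∀ x ∈ K, ∀ y ∈ K, dist x y < δ → ∀ φ ∈ G, dist (φ x) (φ y) < ε)
    {ι : Type*} {l : Filter ι} {φ : ι → X ≃ₜ X} (hφ : ∀ i, φ i ∈ G) {u : ι → X} {x : X}
    (hu : Tendsto u l (𝓝 x)) : Tendsto (fun i => dist (φ i x) (φ i (u i))) l (𝓝 0) := by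
  rw [Metric.tendsto_nhds]
  intro ε hε
  filter_upwards [hu.eventually (equi_at h_equi x hε)] with i hi
  simpa using hi (φ i) (hφ i)

lemma equi_joint {G : Set (X ≃ₜ X)}
    (h_equi : ∀ K : Set X, IsCompact K → ∀ ε > 0, ∃ δ > 0,
      ∀ x ∈ K, ∀ y ∈ K, dist x y < δ → ∀ φ ∈ G, dist (φ x) (φ y) < ε)
    {ι : Type*} {l : Filter ι} {φ : ι → X ≃ₜ X} (hφ : ∀ i, φ i ∈ G) {u : ι → X} {x y : X}
    (hu : Tendsto u l (𝓝 x)) (hy : Tendsto (fun i => φ i x) l (𝓝 y)) :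
    Tendsto (fun i => φ i (u i)) l (𝓝 y) :=
  tendsto_of_tendsto_of_dist hy (equi_tendsto h_equi hφ hu)

lemma ultrafilter_cocompact_or {ι Y : Type*} [TopologicalSpace Y] (U : Ultrafilter ι) (u : ι → Y) :
    Tendsto u U (cocompact Y) ∨ ∃ y, Tendsto u U (𝓝 y) := by
  by_cases h : Tendsto u U (cocompact Y)
  · exact Or.inl h
  · right
    simp only [Filter.Tendsto, Filter.le_def, Filter.mem_cocompact, not_forall] at h
    obtain ⟨S, ⟨K, hK, hKS⟩, hS⟩ := h
    have hKm : K ∈ U.map u := by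
      by_contra hn
      exact hS (Filter.mem_of_superset ((Ultrafilter.compl_mem_iff_notMem).2 hn) hKS)
    obtain ⟨y, -, hy⟩ := hK.ultrafilter_le_nhds (U.map u) (Filter.le_principal_iff.2 hKm)
    exact ⟨y, hy⟩

lemma comp_uniform {G : Set (X ≃ₜ X)} (h_inv : ∀ φ ∈ G, φ.symm ∈ G)
    (h_equi : ∀ K : Set X, IsCompact K → ∀ ε > 0, ∃ δ > 0,
      ∀ x ∈ K, ∀ y ∈ K, dist x y < δ → ∀ φ ∈ G, dist (φ x) (φ y) < ε)
    {φ : ℕ → X ≃ₜ X} (hφ : ∀ i, φ i ∈ G) (φ₀ : X ≃ₜ X)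
    (hlim : ∀ x, Tendsto (fun n => φ n x) atTop (𝓝 (φ₀ x))) (f : C₀(X, ℝ)) :
    Tendsto (fun n => ‖compOp (φ n) f - compOp φ₀ f‖) atTop (𝓝 0) := by
  rw [← tendsto_iff_norm_sub_tendsto_zero, ZeroAtInftyContinuousMap.tendsto_iff_tendstoUniformly,
    tendstoUniformly_iff_tendsto, tendsto_iff_ultrafilter]
  intro U hU
  have hU1 : Tendsto Prod.fst (U : Filter (ℕ × X)) atTop := tendsto_fst.mono_left hU
  rw [tendsto_uniformity_iff_dist_tendsto_zero]
  simp only [compOp_apply]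
  have hinv : ∀ y, Tendsto (fun n => (φ n).symm y) atTop (𝓝 (φ₀.symm y)) := by
    intro y
    have h1 : Tendsto (fun n => φ n (φ₀.symm y)) atTop (𝓝 y) := by simpa using hlim (φ₀.symm y)
    have h2 := equi_tendsto h_equi (fun n => h_inv _ (hφ n)) h1
    simp only [Homeomorph.symm_apply_apply] at h2
    rw [tendsto_iff_dist_tendsto_zero]
    exact h2
  have caseA : ∀ y, Tendsto (fun q : ℕ × X => φ₀ q.2) U (𝓝 y) →
      Tendsto (fun q : ℕ × X => dist (f (φ₀ q.2)) (f (φ q.1 q.2))) U (𝓝 0) := by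
    intro y hy
    have h1 : Tendsto (fun q : ℕ × X => q.2) U (𝓝 (φ₀.symm y)) := by
      simpa [Function.comp_def] using (φ₀.symm.continuous.tendsto y).comp hy
    have h2 : Tendsto (fun q : ℕ × X => φ q.1 (φ₀.symm y)) U (𝓝 y) := by
      simpa [Function.comp_def] using (hlim (φ₀.symm y)).comp hU1
    have h3 := equi_joint h_equi (φ := fun q : ℕ × X => φ q.1) (fun q => hφ q.1) h1 h2
    have hf := (map_continuous f).tendsto y
    simpa using (hf.comp hy).dist (hf.comp h3)
  rcases ultrafilter_cocompact_or U (fun q : ℕ × X => φ₀ q.2) with hA | ⟨y, hy⟩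
  · rcases ultrafilter_cocompact_or U (fun q : ℕ × X => φ q.1 q.2) with hB | ⟨y, hy⟩
    · simpa using ((zero_at_infty f).comp hA).dist ((zero_at_infty f).comp hB)
    · apply caseA y
      have h2 : Tendsto (fun q : ℕ × X => (φ q.1).symm y) U (𝓝 (φ₀.symm y)) := (hinv y).comp hU1
      have h3 := equi_joint h_equi (φ := fun q : ℕ × X => (φ q.1).symm)
        (fun q => h_inv _ (hφ q.1)) hy h2
      simp only [Homeomorph.symm_apply_apply] at h3
      simpa [Function.comp_def] using (φ₀.continuous.tendsto _).comp h3
  · exact caseA y hy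

/-- Pointwise convergence on a dense sequence implies convergence to a continuous limit. -/
lemma exists_limit [CompleteSpace X] {G : Set (X ≃ₜ X)}
    (h_equi : ∀ K : Set X, IsCompact K → ∀ ε > 0, ∃ δ > 0,
      ∀ x ∈ K, ∀ y ∈ K, dist x y < δ → ∀ φ ∈ G, dist (φ x) (φ y) < ε)
    {φ : ℕ → X ≃ₜ X} (hφ : ∀ i, φ i ∈ G) {x s : ℕ → X} (hx : DenseRange x)
    (hs : ∀ n, Tendsto (fun m => φ m (x n)) atTop (𝓝 (s n))) :
    ∃ φ₀ : X → X, Continuous φ₀ ∧ ∀ y, Tendsto (fun m => φ m y) atTop (𝓝 (φ₀ y)) := by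
  have h : ∀ y, ∃ a, Tendsto (fun m => φ m y) atTop (𝓝 a) := by
    intro y
    apply cauchySeq_tendsto_of_complete
    rw [Metric.cauchySeq_iff]
    intro ε hε
    have hev := equi_at h_equi y (show 0 < ε / 3 by linarith)
    obtain ⟨n, hn⟩ := hx.exists_mem_open isOpen_interior
      ⟨y, mem_interior_iff_mem_nhds.2 hev⟩
    have hn' : ∀ φ ∈ G, dist (φ y) (φ (x n)) < ε / 3 := interior_subset hn
    obtain ⟨M, hM⟩ := Metric.cauchySeq_iff.1 (hs n).cauchySeq (ε / 3) (by linarith)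
    refine ⟨M, fun p hp q hq => ?_⟩
    have h1 := hn' _ (hφ p)
    have h2 := hn' _ (hφ q)
    have h3 := hM p hp q hq
    rw [dist_comm] at h2
    calc dist (φ p y) (φ q y) ≤ dist (φ p y) (φ p (x n)) + dist (φ p (x n)) (φ q (x n))
          + dist (φ q (x n)) (φ q y) := dist_triangle4 _ _ _ _
      _ < ε := by linarith
  choose φ₀ hφ₀ using h
  refine ⟨φ₀, ?_, hφ₀⟩
  rw [continuous_iff_continuousAt]
  intro y
  rw [ContinuousAt, Metric.tendsto_nhds]
  intro ε hε
  filter_upwards [equi_at h_equi y (show 0 < ε / 2 by linarith)] with y' hy'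
  have : dist (φ₀ y) (φ₀ y') ≤ ε / 2 :=
    le_of_tendsto' ((hφ₀ y).dist (hφ₀ y')) fun m => (hy' _ (hφ m)).le
  rw [dist_comm]
  linarith

end Limits


/-- **Theorem 5.2.** Let `X` be a locally compact Polish space with a complete compatible
metric, and `G` a relatively SOT-closed group of homeomorphisms of `X`, equicontinuous on
compact sets. For any locally compact Polish space `L` with no isolated points, `G` is
displayable on `C₀(X × L)` via `ψ_φ(k, ℓ) = (φ(k), ℓ)`: there is an equivalent lattice
norm `N` on `C₀(X × L)`, invariant under the operators `C_{ψ_φ}` (`φ ∈ G`), whose lattice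
isometries are exactly these operators. -/
theorem stmt13 {X : Type*} [MetricSpace X] [CompleteSpace X] [SecondCountableTopology X]
    [LocallyCompactSpace X]
    (G : Set (X ≃ₜ X)) (h_id : Homeomorph.refl X ∈ G)
    (h_comp : ∀ φ ∈ G, ∀ ψ ∈ G, φ.trans ψ ∈ G) (h_inv : ∀ φ ∈ G, φ.symm ∈ G)
    (h_equi : ∀ K : Set X, IsCompact K → ∀ ε > 0, ∃ δ > 0,
      ∀ x ∈ K, ∀ y ∈ K, dist x y < δ → ∀ φ ∈ G, dist (φ x) (φ y) < ε)
    (h_closed : ∀ φn : ℕ → X ≃ₜ X, (∀ n, φn n ∈ G) →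
      ∀ T : C₀(X, ℝ) ≃ₗᵢ[ℝ] C₀(X, ℝ),
        (∀ f g : C₀(X, ℝ), T (c0sup f g) = c0sup (T f) (T g)) →
        (∀ f : C₀(X, ℝ), Tendsto (fun n => ‖compOp (φn n) f - T f‖) atTop (𝓝 0)) →
        ∃ φ ∈ G, ∀ f : C₀(X, ℝ), T f = compOp φ f)
    {L : Type*} [TopologicalSpace L] [PolishSpace L] [LocallyCompactSpace L]
    (hL : ∀ ℓ : L, ¬IsOpen ({ℓ} : Set L)) :
    ∃ N : C₀(X × L, ℝ) → ℝ,
      (∀ x y : C₀(X × L, ℝ), N (x + y) ≤ N x + N y) ∧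
      (∀ (c : ℝ) (x : C₀(X × L, ℝ)), N (c • x) = |c| * N x) ∧
      (∀ x y : C₀(X × L, ℝ), (∀ t, |x t| ≤ |y t|) → N x ≤ N y) ∧
      (∃ c > 0, ∃ C : ℝ, ∀ x : C₀(X × L, ℝ), c * ‖x‖ ≤ N x ∧ N x ≤ C * ‖x‖) ∧
      (∀ φ ∈ G, ∀ x : C₀(X × L, ℝ),
        N (compOp (φ.prodCongr (Homeomorph.refl L)) x) = N x) ∧
      (∀ T : C₀(X × L, ℝ) ≃L[ℝ] C₀(X × L, ℝ),
        (∀ f g : C₀(X × L, ℝ), T (c0sup f g) = c0sup (T f) (T g)) →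
        (∀ x : C₀(X × L, ℝ), N (T x) = N x) →
        ∃ φ ∈ G, ∀ f : C₀(X × L, ℝ),
          T f = compOp (φ.prodCongr (Homeomorph.refl L)) f) := by
  have hG : G.Nonempty := ⟨_, h_id⟩
  rcases isEmpty_or_nonempty (X × L) with hE | hE
  · have hsub : ∀ f g : C₀(X × L, ℝ), f = g := fun f g =>
      ZeroAtInftyContinuousMap.ext fun t => (hE.false t).elim
    refine ⟨fun f => ‖f‖, norm_add_le, fun c f => ?_, fun f g _ => by rw [hsub f g],
      ⟨1, one_pos, 1, fun f => ⟨by simp, by simp⟩⟩, fun φ _ f => congrArg _ (hsub _ f),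
      fun T _ _ => ⟨_, h_id, fun f => hsub _ _⟩⟩
    show ‖c • f‖ = |c| * ‖f‖
    rw [norm_smul, Real.norm_eq_abs]
  obtain ⟨z, hzd, hzi⟩ := exists_good_seq (X := X) hL
  refine ⟨fun f => ‖f‖ + pSup G z f, ?_, ?_, ?_, ?_, ?_, ?_⟩
  · intro f g
    have h1 := norm_add_le f g
    have h2 := pSup_add hG z f g
    show ‖f + g‖ + pSup G z (f + g) ≤ (‖f‖ + pSup G z f) + (‖g‖ + pSup G z g)
    linarith
  · intro c f
    show ‖c • f‖ + pSup G z (c • f) = |c| * (‖f‖ + pSup G z f)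
    rw [pSup_smul, norm_smul, Real.norm_eq_abs]; ring
  · intro f g h
    exact add_le_add (c0_norm_le (norm_nonneg _) fun t => (h t).trans (c0_abs_le_norm g t))
      (pSup_mono hG z f g h)
  · refine ⟨1, one_pos, 5 / 2, fun f => ⟨?_, ?_⟩⟩
    · have := pSup_nonneg (G := G) z f
      show 1 * ‖f‖ ≤ ‖f‖ + pSup G z f
      linarith
    · have := pSup_le hG z fun φ _ => pSum_le z φ f
      show ‖f‖ + pSup G z f ≤ 5 / 2 * ‖f‖
      linarith
  · intro φ hφ f
    show ‖_‖ + pSup G z _ = ‖f‖ + pSup G z f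
    rw [c0_norm_comp, pSup_comp hG h_comp h_inv z hφ]
  intro T hT hN
  obtain ⟨σ, w, v, hw, hv, hw0, hv0, hTw, hTv, hwv⟩ := c0_lattice_iso T hT
  have hw1 := weight_le_one hL hG z T σ w hw hTw hN
  have hv1 := weight_le_one hL hG z T.symm σ.symm v hv hTv (fun f => by
    have := hN (T.symm f)
    simp only [ContinuousLinearEquiv.apply_symm_apply] at this
    exact this.symm)
  have hw_one : ∀ t, w t = 1 := by
    intro t
    refine le_antisymm (hw1 t) ?_
    calc 1 = w t * v (σ t) := (hwv t).symm
      _ ≤ w t := mul_le_of_le_one_right (hw0 t).le (hv1 _)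
  have hTσ : ∀ f, T f = compOp σ f := fun f =>
    ZeroAtInftyContinuousMap.ext fun t => by rw [hTw, hw_one, one_mul, compOp_apply]
  have hσp : ∀ f, pSup G z (compOp σ f) = pSup G z f := by
    intro f
    have : ‖T f‖ + pSup G z (T f) = ‖f‖ + pSup G z f := hN f
    rw [hTσ, c0_norm_comp] at this
    linarith
  -- second coordinates are preserved
  have hsnd : ∀ n, (σ (z n)).2 = (z n).2 := by
    intro n
    induction n using Nat.strong_induction_on with
    | _ n ih =>
      by_contra hne
      obtain ⟨φ, -, hφ⟩ := approx_of_invariant h_id z σ hσp n (Prod.snd ⁻¹' {(z n).2})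
        (isClosed_singleton.preimage continuous_snd) (by
          intro k hk hmem
          have hmem' : (σ (z k)).2 = (z n).2 := hmem
          rcases hk.lt_or_eq with h | h
          · rw [ih k h] at hmem'
            exact h.ne (hzi hmem')
          · subst h; exact hne hmem')
      exact hφ n le_rfl rfl
  have happ : ∀ m : ℕ, ∃ φ ∈ G, ∀ i ≤ m,
      dist (φ (z i).1) (σ (z i)).1 < 1 / ((m : ℝ) + 1) := by
    intro m
    have hpos : (0 : ℝ) < 1 / ((m : ℝ) + 1) := by positivity
    obtain ⟨φ, hφG, hφ⟩ := approx_of_invariant h_id z σ hσp m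
      (⋃ i ∈ Set.Iic m, (Metric.ball (σ (z i)).1 (1 / ((m : ℝ) + 1)))ᶜ ×ˢ {(z i).2})
      ((Set.finite_Iic m).isClosed_biUnion fun i _ =>
        Metric.isOpen_ball.isClosed_compl.prod isClosed_singleton) (by
          intro k hk hmem
          simp only [Set.mem_iUnion, Set.mem_prod, Set.mem_singleton_iff] at hmem
          obtain ⟨i, -, h1, h2⟩ := hmem
          rw [hsnd k] at h2
          have hki : k = i := hzi h2
          subst hki
          exact h1 (Metric.mem_ball_self hpos))
    refine ⟨φ, hφG, fun i hi => ?_⟩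
    by_contra hn
    refine hφ i hi ?_
    simp only [Set.mem_iUnion, Set.mem_prod, Set.mem_singleton_iff]
    exact ⟨i, hi, hn, rfl⟩
  choose φ hφG hφ using happ
  have hlim1 : ∀ n, Tendsto (fun m => φ m (z n).1) atTop (𝓝 (σ (z n)).1) := by
    intro n
    rw [tendsto_iff_dist_tendsto_zero]
    refine squeeze_zero' (Eventually.of_forall fun _ => dist_nonneg) ?_
      tendsto_one_div_add_atTop_nhds_zero_nat
    filter_upwards [eventually_ge_atTop n] with m hm
    exact (hφ m n hm).le
  obtain ⟨⟨x₀, ℓ₀⟩⟩ := id hE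
  have : Nonempty L := ⟨ℓ₀⟩
  have hxd : DenseRange fun n => (z n).1 :=
    (Prod.fst_surjective (α := X) (β := L)).denseRange.comp hzd continuous_fst
  obtain ⟨φ₀, hφ₀c, hφ₀⟩ := exists_limit h_equi hφG hxd hlim1
  have hσφ : ∀ t, σ t = (φ₀ t.1, t.2) := by
    have : (σ : X × L → X × L) = fun t => (φ₀ t.1, t.2) := by
      refine hzd.equalizer σ.continuous (by fun_prop) ?_
      ext1 n
      exact Prod.ext (tendsto_nhds_unique (hlim1 n) (hφ₀ _)) (hsnd n)
    exact fun t => congrFun this t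
  let Φ : X ≃ₜ X :=
    { toFun := φ₀
      invFun := fun y => (σ.symm (y, ℓ₀)).1
      left_inv := fun y => by
        have := hσφ (y, ℓ₀)
        simp only at this ⊢
        rw [← this, σ.symm_apply_apply]
      right_inv := fun y => by
        have := hσφ (σ.symm (y, ℓ₀))
        rw [σ.apply_symm_apply] at this
        exact (congrArg Prod.fst this).symm
      continuous_toFun := hφ₀c
      continuous_invFun := by
        exact continuous_fst.comp (σ.symm.continuous.comp (by fun_prop)) }
  let S : C₀(X, ℝ) ≃ₗᵢ[ℝ] C₀(X, ℝ) :=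
    { toFun := compOp Φ
      invFun := compOp Φ.symm
      map_add' := fun _ _ => rfl
      map_smul' := fun _ _ => rfl
      left_inv := fun f => ZeroAtInftyContinuousMap.ext fun t => by simp
      right_inv := fun f => ZeroAtInftyContinuousMap.ext fun t => by simp
      norm_map' := fun f => c0_norm_comp Φ f }
  obtain ⟨θ, hθG, hθ⟩ := h_closed φ hφG S (fun f g => rfl)
    (fun f => comp_uniform h_inv h_equi hφG Φ hφ₀ f)
  have hθeq : ∀ y, φ₀ y = θ y := by
    intro y
    refine (c0_ext_pt (c := 1) fun f => ?_).1
    rw [one_mul]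
    exact DFunLike.congr_fun (hθ f) y
  refine ⟨θ, hθG, fun f => ?_⟩
  rw [hTσ]
  refine ZeroAtInftyContinuousMap.ext fun t => ?_
  rw [compOp_apply, compOp_apply, hσφ, hθeq]
  rfl

end
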